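/- In the directed, finite graph G, the number of edges leaving any given vertex is at most one. -/

import Mathlib

open List Filter

section Defs

variable {A : Type*}

/-- The segment `u_[i,j)` of the sequence `u`. -/
def seg (u : ℕ → A) (i j : ℕ) : List A :=
  (List.range (j - i)).map fun k => u (i + k)

/-- A substitution applied to a word, letter by letter. -/
def substWord (σ : A → List A) (w : List A) : List A := w.flatMap σ

/-- `σ^p` applied to a word. -/
def substPow (σ : A → List A) (p : ℕ) (w : List A) : List A := (substWord σ)^[p] w

/-- A substitution is primitive if some power of it sends every letter to a word
containing every letter. -/
def IsPrimitiveSubst (σ : A → List A) : Prop :=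
  ∃ k : ℕ, ∀ a b : A, a ∈ substPow σ k [b]

/-- `u` is a fixed point of `σ`: the image of every prefix of `u` is again a prefix of `u`. -/
def IsFixedPoint (σ : A → List A) (u : ℕ → A) : Prop :=
  ∀ m : ℕ, substWord σ (seg u 0 m) = seg u 0 (substWord σ (seg u 0 m)).length

/-- `u` is aperiodic under the left shift: `T^i u ≠ u` for all `i ≥ 1`. -/
def AperiodicSeq (u : ℕ → A) : Prop := ∀ i : ℕ, 1 ≤ i → (fun n => u (n + i)) ≠ u

/-- The set `E_p` of natural `p`-cutting points. -/
def cutPoints (σ : A → List A) (u : ℕ → A) (p : ℕ) : Set ℕ :=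
  { m | ∃ n : ℕ, m = (substPow σ p (seg u 0 n)).length }

/-- Unilateral recognizability of `σ` (with fixed point `u`). -/
def UnilaterallyRecognizable (σ : A → List A) (u : ℕ → A) : Prop :=
  ∃ L : ℕ, 1 ≤ L ∧ ∀ i j : ℕ,
    seg u i (i + L) = seg u j (j + L) → i ∈ cutPoints σ u 1 → j ∈ cutPoints σ u 1

/-- `L_n(u)`: the set of factors of `u` of length `n`. -/
def factors (u : ℕ → A) (n : ℕ) : Set (List A) := { w | ∃ i : ℕ, w = seg u i (i + n) }

/-- `L(u)`: the language of `u` (including the empty word). -/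
def lang (u : ℕ → A) : Set (List A) := { w | ∃ i n : ℕ, w = seg u i (i + n) }

/-- `w^n`: the concatenation of `n` copies of `w`. -/
def wpow (w : List A) (n : ℕ) : List A := (List.replicate n w).flatten

/-- A nonempty word `v` is primitive if `v = w^n` with `w` nonempty forces `w = v`. -/
def PrimitiveWord (v : List A) : Prop :=
  ∀ w : List A, w ≠ [] → ∀ n : ℕ, 1 ≤ n → v = wpow w n → w = v

/-- `g` is a gap of occurrences of `w` in `u` if every interval of length `g` in `ℤ₊`
contains an occurrence of `w`. -/
def IsGap (u : ℕ → A) (w : List A) (g : ℕ) : Prop := ∀ i : ℕ, w <:+: seg u i (i + g)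

/-- The minimal gap of a word. -/
noncomputable def minGap (u : ℕ → A) (w : List A) : ℕ := sInf { g | IsGap u w g }

/-- `g`: the maximum over `w ∈ L₂(u)` of the minimal gap of `w`. -/
noncomputable def gapConst (u : ℕ → A) : ℕ :=
  sSup { m | ∃ w ∈ factors u 2, m = minGap u w }

/-- A natural `p`-cutting `{α, σ^p(u_{i'}), …, σ^p(u_{i'+k-1}), β}` of `u_[i,i+ℓ)`. -/
def IsNaturalCutting (σ : A → List A) (u : ℕ → A) (p i ℓ : ℕ)
    (α : List A) (i' k : ℕ) (β : List A) : Prop :=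
  1 ≤ k ∧
  α <:+ substPow σ p [u (i' - 1)] ∧
  β <+: substPow σ p [u (i' + k)] ∧
  seg u i (i + ℓ) = α ++ substPow σ p (seg u i' (i' + k)) ++ β ∧
  i + α.length = (substPow σ p (seg u 0 i')).length

section Fin

variable [Fintype A] [Nonempty A] [DecidableEq A]

/-- The incidence matrix of a substitution: the `(a,b)` entry is `|σ(a)|_b`. -/
def incMatrix (σ : A → List A) : Matrix A A ℕ := Matrix.of fun a b => (σ a).count b

/-- The incidence matrix as a real matrix. -/
noncomputable def incMatrixR (σ : A → List A) : Matrix A A ℝ :=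
  Matrix.of fun a b => ((σ a).count b : ℝ)

/-- `S_p = max_{a ∈ A} |σ^p(a)|`. -/
def Sp (σ : A → List A) (p : ℕ) : ℕ :=
  Finset.univ.sup' Finset.univ_nonempty fun a => (substPow σ p [a]).length

/-- `I_p = min_{a ∈ A} |σ^p(a)|`. -/
def Ip (σ : A → List A) (p : ℕ) : ℕ :=
  Finset.univ.inf' Finset.univ_nonempty fun a => (substPow σ p [a]).length

/-- `C = ⌈(max_b β_b)/(min_b β_b)⌉` for a positive eigenvector `β`. -/
noncomputable def Cst (β : A → ℝ) : ℕ :=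
  ⌈(Finset.univ.sup' Finset.univ_nonempty β) / (Finset.univ.inf' Finset.univ_nonempty β)⌉₊

/-- `K = ⌈λ C² max{2(g+1), (#A)²}⌉`. -/
noncomputable def Kst (u : ℕ → A) (lam : ℝ) (β : A → ℝ) : ℕ :=
  ⌈lam * (Cst β : ℝ) ^ 2 *
    max (2 * ((gapConst u : ℝ) + 1)) ((Fintype.card A : ℝ) ^ 2)⌉₊

/-- The constant `p₀` of Lemma 4.2. -/
noncomputable def p0 (u : ℕ → A) (lam : ℝ) (β : A → ℝ) : ℕ :=
  (Kst u lam β) ^ 2 * ((Cst β) ^ 4 * (Kst u lam β + 1) + 2 * (Cst β) ^ 2 + 1) *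
    (∑ n ∈ Finset.Icc ((Cst β) ^ 2 * (Kst u lam β + 1) + 2)
        ((Kst u lam β + 1) * (Cst β) ^ 6 + 2 * (Cst β) ^ 4 + (Cst β) ^ 2 + 2), n) + 1

/-- The constant `L₀ = (C⁴(K+1)+2C²+1) S_{p₀}`. -/
noncomputable def L0 (σ : A → List A) (u : ℕ → A) (lam : ℝ) (β : A → ℝ) : ℕ :=
  ((Cst β) ^ 4 * (Kst u lam β + 1) + 2 * (Cst β) ^ 2 + 1) * Sp σ (p0 u lam β)

/-- The ℓ¹ norm of a vector. -/
def l1norm (f : A → ℝ) : ℝ := ∑ a, |f a|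

/-- The projective metric on positive row vectors. -/
noncomputable def projMetric (x y : A → ℝ) : ℝ :=
  Real.log ((Finset.univ.sup' Finset.univ_nonempty fun a => x a / y a) /
    (Finset.univ.inf' Finset.univ_nonempty fun a => x a / y a))

/-- The Birkhoff contraction coefficient of a matrix. -/
noncomputable def birkhoff (M : Matrix A A ℝ) : ℝ :=
  sSup { r | ∃ x y : A → ℝ, (∀ a, 0 < x a) ∧ (∀ a, 0 < y a) ∧
    LinearIndependent ℝ ![x, y] ∧
    r = projMetric (Matrix.vecMul x M) (Matrix.vecMul y M) / projMetric x y }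

end Fin

/-- Membership in the vertex set `V^*`: pairs `(xac, ybc)` of factors of `u` of length
`N + L₁ + 1` with `a ≠ b` and `|c| = L₁`. -/
def memVstar (u : ℕ → A) (N L₁ : ℕ) (p : List A × List A) : Prop :=
  ∃ (x y c : List A) (a b : A), a ≠ b ∧
    x.length = N ∧ y.length = N ∧ c.length = L₁ ∧
    p.1 = x ++ a :: c ∧ p.2 = y ++ b :: c ∧
    p.1 ∈ factors u (N + L₁ + 1) ∧ p.2 ∈ factors u (N + L₁ + 1)

/-- An edge between representatives: there is a word `w` with `s'w` a suffix of `σ(s)` and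
`t'w` a suffix of `σ(t)`. -/
def edgeRep (σ : A → List A) (p q : List A × List A) : Prop :=
  ∃ w : List A, w ≠ [] ∧ (q.1 ++ w) <:+ substWord σ p.1 ∧ (q.2 ++ w) <:+ substWord σ p.2

/-- An edge in the graph `G` between the unordered pairs represented by `p` and `q`. -/
def graphEdge (σ : A → List A) (p q : List A × List A) : Prop :=
  edgeRep σ p q ∨ edgeRep σ p q.swap ∨ edgeRep σ p.swap q ∨ edgeRep σ p.swap q.swap

/-- A representative generates a gap of natural 1-cutting points. -/
def genGapRep (σ : A → List A) (p : List A × List A) : Prop :=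
  ∃ (α β : A) (γ δ : List A),
    (σ α <:+ σ β ∧ σ α ≠ σ β) ∧
    List.Forall₂ (fun s t => σ s = σ t) γ δ ∧
    (α :: γ) <:+ substWord σ p.1 ∧ (β :: δ) <:+ substWord σ p.2

/-- The unordered pair represented by `p` generates a gap of natural 1-cutting points. -/
def genGap (σ : A → List A) (p : List A × List A) : Prop :=
  genGapRep σ p ∨ genGapRep σ p.swap

/-- The list of consecutive two-letter blocks of a word. -/
def pairsList (l : List A) : List (List A) :=
  List.zipWith (fun a b => [a, b]) l l.tail

end Defs

theorem aux_len {A : Type*} {S T : List A} {a b a' b' : A} {d d' x y x' y' : List A}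
    (hab : a ≠ b)
    (h1 : (x ++ a :: d) <:+ S) (h2 : (y ++ b :: d) <:+ T)
    (h1' : (x' ++ a' :: d') <:+ S) (h2' : (y' ++ b' :: d') <:+ T) :
    d'.length ≤ d.length := by
  by_contra hlt
  push Not at hlt
  have e1 : (a :: d) <:+ S := (List.suffix_append x _).trans h1
  have e2 : (b :: d) <:+ T := (List.suffix_append y _).trans h2
  have f1 : d' <:+ S := ((List.suffix_cons a' d').trans (List.suffix_append x' _)).trans h1'
  have f2 : d' <:+ T := ((List.suffix_cons b' d').trans (List.suffix_append y' _)).trans h2'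
  have g1 : (a :: d) <:+ d' := List.suffix_of_suffix_length_le e1 f1 (by simpa using hlt)
  have g2 : (b :: d) <:+ d' := List.suffix_of_suffix_length_le e2 f2 (by simpa using hlt)
  have g3 : (a :: d) <:+ (b :: d) := List.suffix_of_suffix_length_le g1 g2 (by simp)
  have g4 := g3.eq_of_length (by simp)
  exact hab (List.cons.inj g4).1

theorem aux_suffix_eq {A : Type*} {S x y : List A} (h1 : x <:+ S) (h2 : y <:+ S)
    (h : x.length = y.length) : x = y :=
  (List.suffix_of_suffix_length_le h1 h2 h.le).eq_of_length h

theorem aux_unique {A : Type*} (σ : A → List A) (u : ℕ → A) (N L₁ : ℕ)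
    (p q q' : List A × List A) (hq : memVstar u N L₁ q) (hq' : memVstar u N L₁ q')
    (h : edgeRep σ p q) (h' : edgeRep σ p q') : q = q' := by
  obtain ⟨x, y, c, a, b, hab, hx, hy, hc, e1, e2, -, -⟩ := hq
  obtain ⟨x', y', c', a', b', hab', hx', hy', hc', e1', e2', -, -⟩ := hq'
  obtain ⟨w, -, s1, s2⟩ := h
  obtain ⟨w', -, s1', s2'⟩ := h'
  have k1 : (c' ++ w').length ≤ (c ++ w).length :=
    aux_len (S := substWord σ p.1) (T := substWord σ p.2) hab (x := x) (y := y) (x' := x')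
      (y' := y') (a' := a') (b' := b') (by simpa [e1] using s1) (by simpa [e2] using s2)
      (by simpa [e1'] using s1') (by simpa [e2'] using s2')
  have k2 : (c ++ w).length ≤ (c' ++ w').length :=
    aux_len (S := substWord σ p.1) (T := substWord σ p.2) hab' (x := x') (y := y') (x' := x)
      (y' := y) (a' := a) (b' := b) (by simpa [e1'] using s1') (by simpa [e2'] using s2')
      (by simpa [e1] using s1) (by simpa [e2] using s2)
  simp only [List.length_append] at k1 k2
  have l1 : q.1.length = q'.1.length := by simp [e1, e1']; omega
  have l2 : q.2.length = q'.2.length := by simp [e2, e2']; omega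
  have hw : w.length = w'.length := by omega
  have r1 := aux_suffix_eq s1 s1' (by simp; omega)
  have r2 := aux_suffix_eq s2 s2' (by simp; omega)
  exact Prod.ext (List.append_inj r1 l1).1 (List.append_inj r2 l2).1

theorem aux_mem_swap {A : Type*} {u : ℕ → A} {N L₁ : ℕ} {q : List A × List A}
    (hq : memVstar u N L₁ q) : memVstar u N L₁ q.swap := by
  obtain ⟨x, y, c, a, b, hab, hx, hy, hc, e1, e2, m1, m2⟩ := hq
  exact ⟨y, x, c, b, a, hab.symm, hy, hx, hc, e2, e1, m2, m1⟩

theorem aux_graph {A : Type*} {σ : A → List A} {p q : List A × List A}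
    (h : graphEdge σ p q) : edgeRep σ p q ∨ edgeRep σ p q.swap := by
  rcases h with h | h | ⟨w, hw, h1, h2⟩ | ⟨w, hw, h1, h2⟩
  · exact Or.inl h
  · exact Or.inr h
  · exact Or.inr ⟨w, hw, h2, h1⟩
  · exact Or.inl ⟨w, hw, h2, h1⟩

/-- Remark 4.6: in the directed finite graph `G`, the number of edges leaving any given
vertex is at most one (two edges leaving the same vertex end at the same vertex, i.e. at
equal unordered pairs). -/
theorem stmt_15 (A : Type*) [Fintype A] [DecidableEq A] [Nonempty A]
    (h2 : 2 ≤ Fintype.card A)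
    (σ : A → List A) (hσne : ∀ a, σ a ≠ [])
    (hprim : IsPrimitiveSubst σ)
    (u : ℕ → A) (hfix : IsFixedPoint σ u) (hap : AperiodicSeq u)
    (lam : ℝ) (β : A → ℝ) (hβ : ∀ a, 0 < β a)
    (heig : (incMatrixR σ).mulVec β = lam • β)
    (ρ : ℝ) (hρ1 : 1 < ρ) (hρlam : ρ < lam)
    (L₁ : ℕ)
    (hL₁ : ∀ L : ℕ, L₁ ≤ L → ∀ i : ℕ,
      ρ * (L : ℝ) ≤ ((substWord σ (seg u i (i + L))).length : ℝ))
    (L₀ : ℕ)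
    (hL₀rec : ∀ i j : ℕ, L₀ ≤ i → L₀ ≤ j →
      seg u (i - L₀) (i + L₀) = seg u (j - L₀) (j + L₀) →
      i ∈ cutPoints σ u 1 → j ∈ cutPoints σ u 1)
    (hL₀comp : ∀ i j m n : ℕ, L₀ ≤ i → L₀ ≤ j →
      seg u (i - L₀) (i + L₀) = seg u (j - L₀) (j + L₀) →
      (substWord σ (seg u 0 m)).length ≤ i → i < (substWord σ (seg u 0 (m + 1))).length →
      (substWord σ (seg u 0 n)).length ≤ j → j < (substWord σ (seg u 0 (n + 1))).length →
      u m = u n)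
    (N : ℕ)
    (hN : max ((Sp σ 1 : ℝ) * ((L₁ : ℝ) + 1) - 1)
        ((1 + (L₀ : ℝ) * ((Ip σ 1 : ℝ)⁻¹ + 1)) / (ρ - 1)) < (N : ℝ)) :
    ∀ p q q' : List A × List A,
      memVstar u N L₁ p → memVstar u N L₁ q → memVstar u N L₁ q' →
      graphEdge σ p q → graphEdge σ p q' → q = q' ∨ q = q'.swap := by
  intro p q q' _ hq hq' h h'
  rcases aux_graph h with h | h <;> rcases aux_graph h' with h' | h'
  · exact Or.inl (aux_unique σ u N L₁ p q q' hq hq' h h')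
  · exact Or.inr (aux_unique σ u N L₁ p q _ hq (aux_mem_swap hq') h h')
  · have := aux_unique σ u N L₁ p _ q' (aux_mem_swap hq) hq' h h'
    exact Or.inr (by rw [← this, Prod.swap_swap])
  · have := aux_unique σ u N L₁ p _ _ (aux_mem_swap hq) (aux_mem_swap hq') h h'
    exact Or.inl (Prod.swap_injective this)
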